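/- Let σ be a saturation function and f the associated vector field on ℝ². The system (T₀) is globally asymptotically stable with respect to the origin: the origin is a Lyapunov-stable equilibrium of (T₀) and every solution (z(t),y(t)) of (T₀) converges to (0,0) as t→+∞. -/

import Mathlib

open Real Filter MeasureTheory intervalIntegral RealInnerProductSpace

noncomputable section

/-- A saturation function: odd, globally Lipschitz, sign-definite, with finite positive limits
of `σ` at `+∞` and of `σ ξ / ξ` at `0`, non-decreasing, differentiable on `(0,∞)` with
non-increasing derivative there. -/
def IsSaturation (σ : ℝ → ℝ) : Prop :=
  (∀ ξ, σ (-ξ) = -σ ξ) ∧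
  (∃ L : NNReal, LipschitzWith L σ) ∧
  (∀ ξ : ℝ, ξ ≠ 0 → σ ξ * ξ > 0) ∧
  (∃ l > 0, Tendsto σ atTop (nhds l)) ∧
  (∃ l > 0, Tendsto (fun ξ => σ ξ / ξ) (nhdsWithin 0 {(0:ℝ)}ᶜ) (nhds l)) ∧
  Monotone σ ∧
  DifferentiableOn ℝ σ (Set.Ioi 0) ∧
  AntitoneOn (deriv σ) (Set.Ioi 0)

/-- The modified saturation function `S` associated with `σ`:
`S ξ = (2/π) ∫_0^{π/2} sin v · σ(ξ sin v) dv`. -/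
def modSat (σ : ℝ → ℝ) (ξ : ℝ) : ℝ :=
  (2 / Real.pi) * ∫ v in (0:ℝ)..(Real.pi / 2), Real.sin v * σ (ξ * Real.sin v)

abbrev E2 := EuclideanSpace ℝ (Fin 2)

open Classical in
/-- The radial vector field `f(z) = S(‖z‖) z / ‖z‖`, `f(0) = 0`. -/
def fvec (σ : ℝ → ℝ) (z : E2) : E2 :=
  if z = 0 then 0 else (modSat σ ‖z‖ / ‖z‖) • z

/-- `(z, y)` solves the limit system `(T₀)`: `ż = y - f(z)`, `ẏ = -f(z)`, for `t ≥ 0`. -/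
def IsSolT0 (σ : ℝ → ℝ) (z y : ℝ → E2) : Prop :=
  ∀ t : ℝ, 0 ≤ t →
    HasDerivAt z (y t - fvec σ (z t)) t ∧ HasDerivAt y (-(fvec σ (z t))) t


theorem modSat_zero {σ : ℝ → ℝ} (hσ : IsSaturation σ) : modSat σ 0 = 0 := by
  have h0 : σ 0 = 0 := by
    have := hσ.1 0
    simp at this
    linarith
  simp [modSat, h0]

theorem modSat_cont {σ : ℝ → ℝ} (hσ : IsSaturation σ) : Continuous (modSat σ) := by
  obtain ⟨L, hL⟩ := hσ.2.1
  have hc := hL.continuous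
  unfold modSat
  refine continuous_const.mul ?_
  apply intervalIntegral.continuous_parametric_intervalIntegral_of_continuous' (f := fun ξ v => Real.sin v * σ (ξ * Real.sin v))
  simp only [Function.uncurry_def]
  fun_prop

theorem modSat_int {σ : ℝ → ℝ} (hσ : IsSaturation σ) (ξ a b : ℝ) :
    IntervalIntegrable (fun v => Real.sin v * σ (ξ * Real.sin v)) volume a b := by
  obtain ⟨L, hL⟩ := hσ.2.1
  have hc := hL.continuous
  apply Continuous.intervalIntegrable
  fun_prop

theorem modSat_mono {σ : ℝ → ℝ} (hσ : IsSaturation σ) : Monotone (modSat σ) := by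
  intro a b hab
  unfold modSat
  have hpi := Real.pi_pos
  refine mul_le_mul_of_nonneg_left ?_ (by positivity)
  apply intervalIntegral.integral_mono_on (by positivity) (modSat_int hσ _ _ _) (modSat_int hσ _ _ _)
  intro v hv
  have hs : 0 ≤ Real.sin v := Real.sin_nonneg_of_nonneg_of_le_pi hv.1 (by linarith [hv.2])
  exact mul_le_mul_of_nonneg_left (hσ.2.2.2.2.2.1 (mul_le_mul_of_nonneg_right hab hs)) hs

theorem modSat_pos {σ : ℝ → ℝ} (hσ : IsSaturation σ) {r : ℝ} (hr : 0 < r) : 0 < modSat σ r := by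
  unfold modSat
  have hpi := Real.pi_pos
  refine mul_pos (by positivity) ?_
  apply intervalIntegral.intervalIntegral_pos_of_pos_on (modSat_int hσ _ _ _) _ (by positivity)
  intro v hv
  have hs : 0 < Real.sin v := Real.sin_pos_of_pos_of_lt_pi hv.1 (by linarith [hv.2])
  have h1 : 0 < r * Real.sin v := mul_pos hr hs
  exact mul_pos hs (pos_of_mul_pos_left (hσ.2.2.1 _ h1.ne') h1.le)

theorem fvec_norm {σ : ℝ → ℝ} (hσ : IsSaturation σ) (z : E2) : ‖fvec σ z‖ = modSat σ ‖z‖ := by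
  unfold fvec
  split_ifs with h
  · simp [h, modSat_zero hσ]
  · have hz : 0 < ‖z‖ := norm_pos_iff.2 h
    rw [norm_smul, Real.norm_of_nonneg (div_nonneg (modSat_pos hσ hz).le hz.le)]
    field_simp

/-- primitive of `S` -/
def primS (σ : ℝ → ℝ) (r : ℝ) : ℝ := ∫ s in (0:ℝ)..r, modSat σ s

theorem primS_deriv {σ : ℝ → ℝ} (hσ : IsSaturation σ) (r : ℝ) :
    HasDerivAt (primS σ) (modSat σ r) r :=
  (modSat_cont hσ).integral_hasStrictDerivAt 0 r |>.hasDerivAt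

theorem primS_zero (σ : ℝ → ℝ) : primS σ 0 = 0 := by simp [primS]

theorem primS_mono {σ : ℝ → ℝ} (hσ : IsSaturation σ) : StrictMonoOn (primS σ) (Set.Ici 0) := by
  apply strictMonoOn_of_deriv_pos (convex_Ici 0)
  · exact fun x _ => (primS_deriv hσ x).continuousAt.continuousWithinAt
  · intro x hx
    rw [interior_Ici] at hx
    rw [(primS_deriv hσ x).deriv]
    exact modSat_pos hσ hx

theorem primS_lower {σ : ℝ → ℝ} (hσ : IsSaturation σ) {R : ℝ} (hR : 1 ≤ R) :
    modSat σ 1 * (R - 1) ≤ primS σ R := by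
  have h1 : 0 ≤ primS σ 1 := by
    have := (primS_mono hσ).monotoneOn (Set.mem_Ici.2 le_rfl) (Set.mem_Ici.2 zero_le_one) zero_le_one
    rwa [primS_zero] at this
  have := (convex_Ici (1:ℝ)).mul_sub_le_image_sub_of_le_deriv (f := primS σ) (C := modSat σ 1)
    (fun x _ => (primS_deriv hσ x).continuousAt.continuousWithinAt)
    (fun x _ => (primS_deriv hσ x).differentiableAt.differentiableWithinAt)
    (fun x hx => by
      rw [interior_Ici] at hx
      rw [(primS_deriv hσ x).deriv]
      exact modSat_mono hσ (le_of_lt hx))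
    1 (Set.mem_Ici.2 le_rfl) R hR hR
  linarith

theorem primS_norm_deriv {σ : ℝ → ℝ} (hσ : IsSaturation σ) {z : ℝ → E2} {z' : E2} {t : ℝ}
    (hz : HasDerivAt z z' t) :
    HasDerivAt (fun s => primS σ ‖z s‖) (inner ℝ (fvec σ (z t)) z') t := by
  by_cases h : z t = 0
  · have h1 : HasFDerivAt (fun w : E2 => primS σ ‖w‖) (0 : E2 →L[ℝ] ℝ) (z t) := by
      rw [h, hasFDerivAt_iff_isLittleO_nhds_zero]
      have h2 := (primS_deriv hσ 0).hasFDerivAt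
      rw [hasFDerivAt_iff_isLittleO_nhds_zero] at h2
      have h3 : Tendsto (fun w : E2 => ‖w‖) (nhds 0) (nhds 0) := by
        simpa using (continuous_norm (E := E2)).tendsto 0
      have h4 := h2.comp_tendsto h3
      rw [← Asymptotics.isLittleO_norm_right]
      simpa [Function.comp_def, modSat_zero hσ, primS_zero] using h4
    have h5 := h1.comp_hasDerivAt t hz
    refine HasDerivAt.congr_deriv h5 ?_
    simp [fvec, h]
  · have hn : 0 < ‖z t‖ := norm_pos_iff.2 h
    have h1 : HasDerivAt (fun s => ‖z s‖) (inner ℝ (z t) z' / ‖z t‖) t := by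
      have := (hz.norm_sq).sqrt (by positivity)
      simp only [Real.sqrt_sq (norm_nonneg _)] at this
      convert this using 1
      field_simp
    have h2 := (primS_deriv hσ ‖z t‖).comp t h1
    refine HasDerivAt.congr_deriv h2 ?_
    simp only [fvec, h, if_false, real_inner_smul_left]
    field_simp

/-- Lyapunov function -/
def lyap (σ : ℝ → ℝ) (z y : E2) : ℝ := primS σ ‖z‖ + ‖y‖ ^ 2 / 2

theorem lyap_deriv {σ : ℝ → ℝ} (hσ : IsSaturation σ) {z y : ℝ → E2} (h : IsSolT0 σ z y)
    {t : ℝ} (ht : 0 ≤ t) :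
    HasDerivAt (fun s => lyap σ (z s) (y s)) (-(modSat σ ‖z t‖) ^ 2) t := by
  obtain ⟨h1, h2⟩ := h t ht
  have h3 := (primS_norm_deriv hσ h1).add (h2.norm_sq.div_const 2)
  refine HasDerivAt.congr_deriv h3 ?_
  rw [← fvec_norm hσ, inner_sub_right, inner_neg_right, real_inner_self_eq_norm_sq,
    real_inner_comm]
  ring

theorem primS_nonneg {σ : ℝ → ℝ} (hσ : IsSaturation σ) {r : ℝ} (hr : 0 ≤ r) : 0 ≤ primS σ r := by
  have := (primS_mono hσ).monotoneOn (Set.mem_Ici.2 le_rfl) (Set.mem_Ici.2 hr) hr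
  rwa [primS_zero] at this

theorem lyap_anti {σ : ℝ → ℝ} (hσ : IsSaturation σ) {z y : ℝ → E2} (h : IsSolT0 σ z y) :
    AntitoneOn (fun s => lyap σ (z s) (y s)) (Set.Ici 0) := by
  apply antitoneOn_of_deriv_nonpos (convex_Ici 0)
  · exact fun x hx => (lyap_deriv hσ h hx).continuousAt.continuousWithinAt
  · intro x hx
    rw [interior_Ici] at hx
    exact (lyap_deriv hσ h (le_of_lt hx)).differentiableAt.differentiableWithinAt
  · intro x hx
    rw [interior_Ici] at hx
    rw [(lyap_deriv hσ h (le_of_lt hx)).deriv]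
    nlinarith [sq_nonneg (modSat σ ‖z x‖)]

theorem norm_z_le {σ : ℝ → ℝ} (hσ : IsSaturation σ) {z y : E2} {R : ℝ} (hR : 0 ≤ R)
    (h : lyap σ z y ≤ primS σ R) : ‖z‖ ≤ R := by
  by_contra! hc
  have := primS_mono hσ (Set.mem_Ici.2 hR) (Set.mem_Ici.2 (norm_nonneg z)) hc
  unfold lyap at h
  nlinarith [sq_nonneg ‖y‖]

theorem norm_y_le {σ : ℝ → ℝ} (hσ : IsSaturation σ) {z y : E2} {R : ℝ} (hR : 0 ≤ R)
    (h : lyap σ z y ≤ R ^ 2 / 2) : ‖y‖ ≤ R := by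
  have := primS_nonneg hσ (norm_nonneg z)
  unfold lyap at h
  exact abs_le_of_sq_le_sq' (by linarith) hR |>.2

theorem stable_part {σ : ℝ → ℝ} (hσ : IsSaturation σ) :
    ∀ δ > 0, ∃ η > 0, ∀ z y : ℝ → E2, IsSolT0 σ z y →
      ‖(z 0, y 0)‖ ≤ η → ∀ t : ℝ, 0 ≤ t → ‖(z t, y t)‖ ≤ δ := by
  intro δ hδ
  have hF : 0 < primS σ δ := by
    have := primS_mono hσ (Set.mem_Ici.2 le_rfl) (Set.mem_Ici.2 hδ.le) hδ
    rwa [primS_zero] at this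
  have hm : 0 < min (primS σ δ) (δ ^ 2 / 2) := lt_min hF (by positivity)
  have hFc : Continuous (primS σ) :=
    continuous_iff_continuousAt.2 fun x => (primS_deriv hσ x).continuousAt
  have hc : Continuous (fun p : E2 × E2 => lyap σ p.1 p.2) := by
    unfold lyap
    fun_prop
  have ht : Tendsto (fun p : E2 × E2 => lyap σ p.1 p.2) (nhds 0) (nhds 0) := by
    have := hc.tendsto 0
    simpa [lyap, primS_zero] using this
  have he := ht.eventually (gt_mem_nhds hm)
  obtain ⟨η, hη, hb⟩ := Metric.nhds_basis_closedBall.eventually_iff.1 he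
  refine ⟨η, hη, fun z y h h0 t ht => ?_⟩
  have h1 := hb (x := (z 0, y 0)) (by simpa using h0)
  have h2 := lyap_anti hσ h (Set.mem_Ici.2 le_rfl) (Set.mem_Ici.2 ht) ht
  have h3 := lt_min_iff.1 h1
  simp only at h2 h3
  rw [Prod.norm_def]
  exact max_le (norm_z_le hσ hδ.le (by linarith)) (norm_y_le (z := z t) hσ hδ.le (by linarith))

theorem z_lip {σ : ℝ → ℝ} (hσ : IsSaturation σ) {z y : ℝ → E2} (h : IsSolT0 σ z y) :
    ∃ K > 0, ∀ s t, 0 ≤ s → 0 ≤ t → ‖z t - z s‖ ≤ K * ‖t - s‖ := by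
  set V0 := lyap σ (z 0) (y 0) with hV0
  have hV0n : 0 ≤ V0 := by
    have := primS_nonneg hσ (norm_nonneg (z 0))
    rw [hV0]; unfold lyap; positivity
  have hS1 := modSat_pos hσ one_pos
  set R := 1 + V0 / modSat σ 1 with hR
  have hR1 : 1 ≤ R := by
    have : 0 ≤ V0 / modSat σ 1 := by positivity
    linarith
  have hRF : V0 ≤ primS σ R := by
    have h1 := primS_lower hσ hR1
    have h2 : modSat σ 1 * (R - 1) = V0 := by rw [hR]; field_simp; ring
    linarith
  have hle : ∀ t, 0 ≤ t → lyap σ (z t) (y t) ≤ V0 := fun t ht =>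
    lyap_anti hσ h (Set.mem_Ici.2 le_rfl) (Set.mem_Ici.2 ht) ht
  have hSR := modSat_pos hσ (by linarith : 0 < R)
  refine ⟨√(2 * V0) + modSat σ R, by positivity, fun s t hs ht => ?_⟩
  apply (convex_Ici (0:ℝ)).norm_image_sub_le_of_norm_hasDerivWithin_le
    (f' := fun t => y t - fvec σ (z t)) (s := Set.Ici (0:ℝ))
    (fun x hx => (h x hx).1.hasDerivWithinAt) _ hs ht
  intro x hx
  have hy : ‖y x‖ ≤ √(2 * V0) := by
    apply norm_y_le (z := z x) hσ (by positivity)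
    rw [Real.sq_sqrt (by positivity)]
    linarith [hle x hx]
  have hz : ‖z x‖ ≤ R := norm_z_le (y := y x) hσ (by linarith) ((hle x hx).trans hRF)
  calc _ ≤ ‖y x‖ + ‖fvec σ (z x)‖ := norm_sub_le _ _
    _ ≤ _ := by rw [fvec_norm hσ]; exact add_le_add hy (modSat_mono hσ hz)

theorem lyap_lim {σ : ℝ → ℝ} (hσ : IsSaturation σ) {z y : ℝ → E2} (h : IsSolT0 σ z y) :
    ∃ l, Tendsto (fun s => lyap σ (z s) (y s)) atTop (nhds l) := by
  set g : ℝ → ℝ := fun s => lyap σ (z (max s 0)) (y (max s 0)) with hg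
  have ha : Antitone g := fun a b hab =>
    lyap_anti hσ h (Set.mem_Ici.2 (le_max_right _ _)) (Set.mem_Ici.2 (le_max_right _ _))
      (max_le_max_right 0 hab)
  have hb : BddBelow (Set.range g) := by
    refine ⟨0, ?_⟩
    rintro _ ⟨s, rfl⟩
    have := primS_nonneg hσ (norm_nonneg (z (max s 0)))
    simp only [hg]; unfold lyap; positivity
  refine ⟨_, (tendsto_atTop_ciInf ha hb).congr' ?_⟩
  filter_upwards [eventually_ge_atTop 0] with s hs
  simp [hg, max_eq_left hs]

theorem z_lim {σ : ℝ → ℝ} (hσ : IsSaturation σ) {z y : ℝ → E2} (h : IsSolT0 σ z y) :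
    ∀ ε > 0, ∀ᶠ t in atTop, ‖z t‖ < ε := by
  intro ε hε
  obtain ⟨K, hK, hlip⟩ := z_lip hσ h
  obtain ⟨l, hl⟩ := lyap_lim hσ h
  set a := ε / (2 * K) with ha
  have hap : 0 < a := by positivity
  have hS := modSat_pos hσ (half_pos hε)
  have h1 : Tendsto (fun t => lyap σ (z t) (y t) - lyap σ (z (t + a)) (y (t + a))) atTop (nhds 0) := by
    have := hl.sub (hl.comp (tendsto_atTop_add_const_right atTop a tendsto_id))
    simpa [Function.comp_def] using this
  have hd : 0 < modSat σ (ε / 2) ^ 2 * a := by positivity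
  filter_upwards [h1.eventually (gt_mem_nhds hd), eventually_ge_atTop 0] with t ht ht0
  by_contra! hc
  have hge : ∀ s ∈ Set.Icc t (t + a), ε / 2 ≤ ‖z s‖ := by
    intro s hs
    have h2 := hlip s t (ht0.trans hs.1) ht0
    have h3 : ‖t - s‖ ≤ a := by
      rw [Real.norm_eq_abs, abs_le]; constructor <;> linarith [hs.1, hs.2]
    have h4 : K * ‖t - s‖ ≤ ε / 2 := by
      calc _ ≤ K * a := by gcongr
        _ = ε / 2 := by rw [ha]; field_simp
    have h5 : ‖z t‖ - ‖z s‖ ≤ ‖z t - z s‖ := norm_sub_norm_le _ _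
    linarith
  have := (convex_Icc t (t + a)).image_sub_le_mul_sub_of_deriv_le
    (f := fun s => lyap σ (z s) (y s)) (C := -(modSat σ (ε / 2)) ^ 2)
    (fun x hx => (lyap_deriv hσ h (ht0.trans hx.1)).continuousAt.continuousWithinAt)
    (fun x hx => (lyap_deriv hσ h
      (ht0.trans (interior_subset hx).1)).differentiableAt.differentiableWithinAt)
    (fun x hx => by
      have hx' := interior_subset hx
      rw [(lyap_deriv hσ h (ht0.trans hx'.1)).deriv]
      have := modSat_mono hσ (hge x hx')
      nlinarith)
    t ⟨le_rfl, by linarith⟩ (t + a) ⟨by linarith, le_rfl⟩ (by linarith)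
  nlinarith

theorem y_lim {σ : ℝ → ℝ} (hσ : IsSaturation σ) {z y : ℝ → E2} (h : IsSolT0 σ z y) :
    Tendsto y atTop (nhds 0) := by
  rw [Metric.tendsto_atTop]
  intro ε hε
  have hS : ∀ᶠ r in nhds (0:ℝ), modSat σ r < ε / 4 := by
    have := (modSat_cont hσ).tendsto 0
    rw [modSat_zero hσ] at this
    exact this.eventually (gt_mem_nhds (by positivity))
  have hz0 : Tendsto (fun t => ‖z t‖) atTop (nhds 0) := by
    rw [Metric.tendsto_nhds]
    intro e he
    simpa using z_lim hσ h e he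
  obtain ⟨T, hT⟩ := eventually_atTop.1
    ((hz0.eventually hS).and ((z_lim hσ h (ε / 4) (by positivity)).and (eventually_ge_atTop 0)))
  refine ⟨T + 1, fun t ht => ?_⟩
  have key := (convex_Icc (t - 1) t).norm_image_sub_le_of_norm_hasDerivWithin_le
    (f := fun s => z s - (s - (t - 1)) • y s) (C := ε / 4)
    (f' := fun s => (s - t) • fvec σ (z s)) (s := Set.Icc (t - 1) t) (x := t - 1) (y := t)
    (fun x hx => by
      obtain ⟨h1, h2⟩ := h x (hT x (by linarith [hx.1])).2.2
      have h3 := h1.sub (((hasDerivAt_id x).sub_const (t - 1)).smul h2)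
      refine (h3.congr_deriv ?_).hasDerivWithinAt
      simp only [id]
      module)
    (fun x hx => by
      have h1 := (hT x (by linarith [hx.1])).1
      rw [norm_smul, fvec_norm hσ]
      have h2 : ‖x - t‖ ≤ 1 := by
        rw [Real.norm_eq_abs, abs_le]; constructor <;> linarith [hx.1, hx.2]
      have h3 : 0 ≤ modSat σ ‖z x‖ := by rw [← fvec_norm hσ]; positivity
      nlinarith [norm_nonneg (x - t)])
    ⟨le_rfl, by linarith⟩ ⟨by linarith, le_rfl⟩
  have e1 : ‖t - (t - 1)‖ = 1 := by norm_num
  have e2 : y t = z t - z (t - 1)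
      - (z t - (t - (t - 1)) • y t - (z (t - 1) - (t - 1 - (t - 1)) • y (t - 1))) := by
    module
  simp only [e1, mul_one] at key
  have z1 := (hT t (by linarith)).2.1
  have z2 := (hT (t - 1) (by linarith)).2.1
  rw [dist_zero_right, e2]
  have n1 := norm_sub_le (z t - z (t - 1))
    (z t - (t - (t - 1)) • y t - (z (t - 1) - (t - 1 - (t - 1)) • y (t - 1)))
  have n2 := norm_sub_le (z t) (z (t - 1))
  linarith

/-- `(T₀)` is globally asymptotically stable with respect to the origin. -/
theorem stmt10 (σ : ℝ → ℝ) (hσ : IsSaturation σ) :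
    (∀ δ > 0, ∃ η > 0, ∀ z y : ℝ → E2, IsSolT0 σ z y →
      ‖(z 0, y 0)‖ ≤ η → ∀ t : ℝ, 0 ≤ t → ‖(z t, y t)‖ ≤ δ) ∧
    (∀ z y : ℝ → E2, IsSolT0 σ z y →
      Tendsto (fun t => (z t, y t)) atTop (nhds (0, 0))) := by
  refine ⟨stable_part hσ, fun z y h => ?_⟩
  refine Tendsto.prodMk_nhds ?_ (y_lim hσ h)
  rw [Metric.tendsto_nhds]
  intro e he
  simpa using z_lim hσ h e he
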